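/- Let F = (f_1,…,f_t) be in ℤ[x,y] with t ≥ 2, generating a zero-dimensional ideal I in ℚ[x,y], with all f_i of total degree at most d ≥ 1 and all integer coefficients of absolute value at most e^h. Let G = (g_0,…,g_s) be the reduced minimal lexicographic Gröbner basis of I (for x ≺ y). Then there exists a nonzero integer β such that: (a) β·g_j ∈ ℤ[x,y] for all j; (b) |β| ≤ exp(C(t,d,Δ_3(d),h)) and every coefficient of every β·g_j has absolute value at most exp(C(t,d,Δ_3(d),h)); and (c) for every prime p not dividing β, the images of g_0,…,g_s in F_p[x,y] (well defined since all denominators divide β) form the reduced minimal lexicographic Gröbner basis of the ideal generated by f_1 mod p, …, f_t mod p in F_p[x,y]. -/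

import Mathlib

noncomputable section

open Polynomial

/-- Bivariate polynomials `k[x][y]`: the inner `X` is `x`, the outer `X` is `y`. -/
abbrev Biv (k : Type*) [CommRing k] : Type _ := Polynomial (Polynomial k)

variable {k : Type*} [CommRing k]

/-- The leading monomial of `f`, as the pair (y-exponent, x-exponent), for the
lexicographic order induced by `x ≺ y`. -/
def lmon (f : Biv k) : ℕ × ℕ := (f.natDegree, f.leadingCoeff.natDegree)

/-- Divisibility of monomials: `x^{p.2} y^{p.1}` divides `x^{q.2} y^{q.1}`. -/
def monDvd (p q : ℕ × ℕ) : Prop := p.1 ≤ q.1 ∧ p.2 ≤ q.2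

/-- Lexicographic comparison of monomials, `y`-exponent first. -/
def monLt (p q : ℕ × ℕ) : Prop := p.1 < q.1 ∨ (p.1 = q.1 ∧ p.2 < q.2)

/-- The monomial `x^{m.2} y^{m.1}` occurs in `f` (has a nonzero coefficient). -/
def occursIn (f : Biv k) (m : ℕ × ℕ) : Prop := (f.coeff m.1).coeff m.2 ≠ 0

/-- `G` is a Gröbner basis of `I` for the lexicographic order with `x ≺ y`:
its elements are nonzero elements of `I`, and the leading monomial of any nonzero
element of `I` is divisible by the leading monomial of some element of `G`. -/
def IsGB (G : List (Biv k)) (I : Ideal (Biv k)) : Prop :=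
  (∀ g ∈ G, g ≠ 0 ∧ g ∈ I) ∧
  ∀ f ∈ I, f ≠ 0 → ∃ g ∈ G, monDvd (lmon g) (lmon f)

/-- `f` is monic w.r.t. lex `x ≺ y`: the coefficient of its leading monomial is `1`. -/
def lexMonic (f : Biv k) : Prop := f.leadingCoeff.Monic

/-- `g 0, …, g s` is the reduced minimal lexicographic Gröbner basis of `I`,
listed in decreasing order of leading monomials. -/
def IsReducedGB {s : ℕ} (g : Fin (s + 1) → Biv k) (I : Ideal (Biv k)) : Prop :=
  IsGB (List.ofFn g) I ∧
  (∀ j, lexMonic (g j)) ∧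
  (∀ j l, j ≠ l → ∀ m : ℕ × ℕ, occursIn (g j) m → ¬ monDvd (lmon (g l)) m) ∧
  (∀ j l : Fin (s + 1), j < l → monLt (lmon (g l)) (lmon (g j)))

/-- Every monomial of `f` of `y`-degree `< i` is reduced w.r.t. the family `g`. -/
def reducedBelow {s : ℕ} (g : Fin (s + 1) → Biv k) (i : ℕ) (f : Biv k) : Prop :=
  ∀ m : ℕ × ℕ, m.1 < i → occursIn f m → ∀ j, ¬ monDvd (lmon (g j)) m

/-- `A` is the detaching sequence associated to the reduced Gröbner basis `g` of `I`:
`A i = 0` for `i < n_s`, `A (n_j) = g j`, and otherwise `A i` is obtained from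
`y * A (i-1)` by reducing the terms of `y`-degree `< i` modulo `g`
(so `A i - y * A (i-1)` lies in `I` and has `y`-degree `< i`, and the part of `A i`
of `y`-degree `< i` is reduced w.r.t. `g`). -/
def IsDetachingSeq {s : ℕ} (g : Fin (s + 1) → Biv k) (I : Ideal (Biv k))
    (A : ℕ → Biv k) : Prop :=
  (∀ i, i < (g (Fin.last s)).natDegree → A i = 0) ∧
  (∀ j, A ((g j).natDegree) = g j) ∧
  (∀ i, (g (Fin.last s)).natDegree ≤ i → (∀ j, (g j).natDegree ≠ i) →
    (A i - Polynomial.X * A (i - 1)) ∈ I ∧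
    (A i - Polynomial.X * A (i - 1)).degree < (i : WithBot ℕ) ∧
    reducedBelow g i (A i))

/-- The total degree of a bivariate polynomial `f ∈ k[x][y]`. -/
def totDeg {k : Type*} [CommRing k] (f : Biv k) : ℕ :=
  f.support.sup fun j => j + (f.coeff j).natDegree

/-- The height bound `B(n,d,h) = (N+1)h + N log N + log(n(d+1))` with
`N = n²d − nd + n`, for Hermite normal forms of `n × n` matrices of degree `≤ d`
and height `≤ h` over `ℤ[x]`. -/
def Bfun (n d : ℕ) (h : ℝ) : ℝ :=
  (((n ^ 2 * d - n * d + n : ℕ) : ℝ) + 1) * h +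
    ((n ^ 2 * d - n * d + n : ℕ) : ℝ) * Real.log ((n ^ 2 * d - n * d + n : ℕ) : ℝ) +
    Real.log ((n : ℝ) * ((d : ℝ) + 1))

/-- The height bound `C(t,d,D,h) = B(tD,d,h) + h + log 2`. -/
def Cfun (t d D : ℕ) (h : ℝ) : ℝ := Bfun (t * D) d h + h + Real.log 2

/-- `Δ₁(d_y) = d_y`. -/
def Delta1 (dy : ℕ) : ℕ := dy

/-- `Δ₂(d) = 2d′² + d′` with `d′ = max(d,3)`. -/
def Delta2 (d : ℕ) : ℕ := 2 * max d 3 ^ 2 + max d 3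

/-- `Δ₃(d) = 16d′⁴ + 2d′² + 2d′` with `d′ = max(d,3)`. -/
def Delta3 (d : ℕ) : ℕ := 16 * max d 3 ^ 4 + 2 * max d 3 ^ 2 + 2 * max d 3

/-- The inclusion `ℤ[x,y] → ℚ[x,y]`. -/
def toQ : Biv ℤ →+* Biv ℚ :=
  Polynomial.mapRingHom (Polynomial.mapRingHom (Int.castRingHom ℚ))

/-- The reduction `ℤ[x,y] → F_p[x,y]`. -/
def toP (p : ℕ) : Biv ℤ →+* Biv (ZMod p) :=
  Polynomial.mapRingHom (Polynomial.mapRingHom (Int.castRingHom (ZMod p)))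

/-!
A zero-dimensional ideal contains monic polynomials `R(x)` and `S(y)`, and a dimension count in the
style of Sylvester produces them with degrees and cofactors bounded in terms of `d` alone. They
confine the reduced Gröbner basis to a box of monomials. Reducing cofactors modulo `R(x)` and `S(y)`
then bounds the degrees of the cofactors of every `g j`, so that the `g j` lie in the row space of a
Macaulay matrix of `f` of known size.

A nonzero element of this row space is nonzero at its own leading monomial. The columns indexed by
the leading monomials of `I` therefore carry the full rank, and on these columns `g j` is a unit
vector because the basis is reduced. For a maximal minor `β` of these columns, Cramer's rule
represents every `β g j` as an integral combination of the rows; `β` and its coefficients are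
minors, which gives the height bound.

Since the combination is integral, `β g j` lies in the ideal `⟨f⟩` of `ℤ[x,y]`. An element of `⟨f⟩`
whose leading coefficient vanishes modulo `p` can thus be replaced, using `β g j`, by one with
smaller leading monomial and the same image up to a unit. So for `p ∤ β` the leading monomials of
`⟨f mod p⟩` are still divisible by those of the `g j`.
-/

section LeadingMonomials

variable {R : Type*} [CommRing R]

/-- The coefficient of `x^{m.2} y^{m.1}`, as a linear form on `k[x][y]`. -/
def bicoeff (m : ℕ × ℕ) : Biv k →ₗ[k] k :=
  lcoeff k m.2 ∘ₗ (lcoeff k[X] m.1).restrictScalars k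

/-- The coefficientwise extension of a ring homomorphism to bivariate polynomials; `toQ` and
`toP p` are instances. -/
def bivMap (φ : R →+* k) : Biv R →+* Biv k :=
  mapRingHom (mapRingHom φ)

theorem bicoeff_apply (m : ℕ × ℕ) (f : Biv k) : bicoeff m f = (f.coeff m.1).coeff m.2 := rfl

theorem ext_bicoeff {f g : Biv k} (h : ∀ m, bicoeff m f = bicoeff m g) : f = g := by
  ext a b
  exact h (a, b)

theorem bicoeff_bivMap (φ : R →+* k) (m : ℕ × ℕ) (f : Biv R) :
    bicoeff m (bivMap φ f) = φ (bicoeff m f) := by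
  simp [bicoeff_apply, bivMap]

theorem bicoeff_toQ (m : ℕ × ℕ) (f : Biv ℤ) : bicoeff m (toQ f) = bicoeff m f :=
  bicoeff_bivMap (Int.castRingHom ℚ) m f

theorem bicoeff_monomial_monomial (a : ℕ × ℕ) (c : k) (m : ℕ × ℕ) :
    bicoeff m (monomial a.1 (monomial a.2 c) : Biv k) = if m = a then c else 0 := by
  rcases a with ⟨a, b⟩
  rcases m with ⟨i, j⟩
  rw [bicoeff_apply, coeff_monomial]
  by_cases hi : a = i
  · simp [hi, coeff_monomial, eq_comm]
  · simp [hi, Ne.symm hi]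

theorem bicoeff_monomial_mul (a : ℕ × ℕ) (f : Biv k) (m : ℕ × ℕ) :
    bicoeff m (monomial a.1 (monomial a.2 1) * f) = if a ≤ m then bicoeff (m - a) f else 0 := by
  rw [bicoeff_apply, ← C_mul_X_pow_eq_monomial, mul_assoc, coeff_C_mul, coeff_X_pow_mul',
    monomial_one_right_eq_X_pow, coeff_X_pow_mul']
  by_cases h₁ : a.1 ≤ m.1 <;> by_cases h₂ : a.2 ≤ m.2 <;>
    simp [h₁, h₂, Prod.le_def, bicoeff_apply]

theorem smul_eq_C_C_mul (c : k) (f : Biv k) : c • f = C (C c) * f := by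
  ext; simp

theorem bivMap_smul (φ : R →+* k) (c : R) (f : Biv R) : bivMap φ (c • f) = φ c • bivMap φ f :=
  ext_bicoeff fun m => by simp [bicoeff_bivMap]

theorem bivMap_injective {φ : R →+* k} (hφ : Function.Injective φ) :
    Function.Injective (bivMap φ) :=
  map_injective _ (map_injective _ hφ)

theorem bivMap_surjective {φ : R →+* k} (hφ : Function.Surjective φ) :
    Function.Surjective (bivMap φ) :=
  map_surjective _ (map_surjective _ hφ)

theorem monLt_eq_prodLex : monLt = Prod.Lex (· < ·) (· < ·) := by
  funext p q
  simp [monLt, Prod.lex_def]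

theorem wellFounded_monLt : WellFounded monLt := by
  rw [monLt_eq_prodLex]
  exact wellFounded_lt.prod_lex wellFounded_lt

theorem monLt_trichotomy (p q : ℕ × ℕ) : monLt p q ∨ p = q ∨ monLt q p := by
  rw [monLt_eq_prodLex]
  exact trichotomous_of (Prod.Lex (· < ·) (· < ·)) p q

theorem bicoeff_lmon_ne_zero {f : Biv k} (hf : f ≠ 0) : bicoeff (lmon f) f ≠ 0 := by
  simp [bicoeff_apply, lmon, hf]

theorem bicoeff_eq_zero_of_lmon_lt {f : Biv k} {m : ℕ × ℕ} (h : monLt (lmon f) m) :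
    bicoeff m f = 0 := by
  rcases h with hy | ⟨hy, hx⟩
  · rw [bicoeff_apply, coeff_eq_zero_of_natDegree_lt (show f.natDegree < m.1 from hy), coeff_zero]
  · rw [bicoeff_apply, ← hy]
    exact coeff_eq_zero_of_natDegree_lt hx

theorem lmon_eq_of_bicoeff {f : Biv k} {m : ℕ × ℕ} (hm : bicoeff m f ≠ 0)
    (habove : ∀ m', monLt m m' → bicoeff m' f = 0) : lmon f = m := by
  have hf : f ≠ 0 := by
    rintro rfl
    exact hm (map_zero _)
  rcases monLt_trichotomy (lmon f) m with hlt | heq | hgt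
  · exact absurd (bicoeff_eq_zero_of_lmon_lt hlt) hm
  · exact heq
  · exact absurd (habove _ hgt) (bicoeff_lmon_ne_zero hf)

theorem lmon_smul {c : k} {f : Biv k} (h : c * bicoeff (lmon f) f ≠ 0) :
    lmon (c • f) = lmon f :=
  lmon_eq_of_bicoeff (by rwa [map_smul]) fun m hm => by
    rw [map_smul, bicoeff_eq_zero_of_lmon_lt hm, smul_zero]

theorem lmon_bivMap {φ : R →+* k} {f : Biv R} (h : φ (bicoeff (lmon f) f) ≠ 0) :
    lmon (bivMap φ f) = lmon f :=
  lmon_eq_of_bicoeff (by rwa [bicoeff_bivMap]) fun m hm => by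
    rw [bicoeff_bivMap, bicoeff_eq_zero_of_lmon_lt hm, map_zero]

theorem lmon_bivMap_of_injective {φ : R →+* k} (hφ : Function.Injective φ) (f : Biv R) :
    lmon (bivMap φ f) = lmon f := by
  rcases eq_or_ne f 0 with rfl | hf
  · simp [lmon]
  · exact lmon_bivMap ((map_ne_zero_iff φ hφ).2 (bicoeff_lmon_ne_zero hf))

/-- One pseudo-division step of `f` by `g`: when `lmon g` divides `lmon f`, the leading terms
cancel. The exponent `lmon f - lmon g` is truncated otherwise. -/
def pseudoReduce (f g : Biv k) : Biv k :=
  bicoeff (lmon g) g • f - bicoeff (lmon f) f •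
    (monomial (lmon f - lmon g).1 (monomial (lmon f - lmon g).2 1) * g)

theorem lmon_pseudoReduce_lt {f g : Biv k} (hdvd : monDvd (lmon g) (lmon f))
    (h : pseudoReduce f g ≠ 0) : monLt (lmon (pseudoReduce f g)) (lmon f) := by
  have hcoeff (m : ℕ × ℕ) : bicoeff m (pseudoReduce f g) =
      bicoeff (lmon g) g * bicoeff m f - bicoeff (lmon f) f *
        if lmon f - lmon g ≤ m then bicoeff (m - (lmon f - lmon g)) g else 0 := by
    rw [pseudoReduce, map_sub, map_smul, map_smul, bicoeff_monomial_mul, smul_eq_mul, smul_eq_mul]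
  have hne := bicoeff_lmon_ne_zero h
  rcases monLt_trichotomy (lmon (pseudoReduce f g)) (lmon f) with hlt | heq | hgt
  · exact hlt
  · refine absurd ?_ hne
    rw [heq, hcoeff, if_pos tsub_le_self, tsub_tsub_cancel_of_le (Prod.le_def.2 hdvd), mul_comm,
      sub_self]
  · refine absurd ?_ hne
    rw [hcoeff, bicoeff_eq_zero_of_lmon_lt hgt, mul_zero, zero_sub, neg_eq_zero]
    split_ifs with hle
    · rw [bicoeff_eq_zero_of_lmon_lt (f := g), mul_zero]
      obtain ⟨hdvd₁, hdvd₂⟩ := hdvd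
      simp only [monLt, Prod.le_def, Prod.fst_sub, Prod.snd_sub] at hgt hle ⊢
      omega
    · rw [mul_zero]

end LeadingMonomials

section Specialization

variable {R : Type*} [CommRing R] {ι : Type*}

theorem exists_monDvd_lmon_bivMap [IsDomain k] (φ : R →+* k) (J : Ideal (Biv R)) (G : ι → Biv R)
    (hG : ∀ j, G j ∈ J) (hlead : ∀ j, φ (bicoeff (lmon (G j)) (G j)) ≠ 0)
    (hdvd : ∀ F ∈ J, F ≠ 0 → ∃ j, monDvd (lmon (G j)) (lmon F))
    (F : Biv R) (hF : F ∈ J) (hφF : bivMap φ F ≠ 0) :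
    ∃ j, monDvd (lmon (G j)) (lmon (bivMap φ F)) := by
  induction hm : lmon F using wellFounded_monLt.induction generalizing F with
  | _ m ih =>
  subst hm
  have hF₀ : F ≠ 0 := by
    rintro rfl
    exact hφF (map_zero _)
  obtain ⟨j, hj⟩ := hdvd F hF hF₀
  by_cases hlc : φ (bicoeff (lmon F) F) = 0
  · have himage : bivMap φ (pseudoReduce F (G j)) =
        φ (bicoeff (lmon (G j)) (G j)) • bivMap φ F := by
      rw [pseudoReduce, map_sub, bivMap_smul, bivMap_smul, hlc, zero_smul, sub_zero]
    have hmem : pseudoReduce F (G j) ∈ J := by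
      simp only [pseudoReduce, smul_eq_C_C_mul]
      exact J.sub_mem (J.mul_mem_left _ hF) (J.mul_mem_left _ (J.mul_mem_left _ (hG j)))
    have himage₀ : bivMap φ (pseudoReduce F (G j)) ≠ 0 := by
      rw [himage]
      exact smul_ne_zero (hlead j) hφF
    have hlt : monLt (lmon (pseudoReduce F (G j))) (lmon F) := by
      refine lmon_pseudoReduce_lt hj fun h => himage₀ ?_
      rw [h, map_zero]
    obtain ⟨l, hl⟩ := ih _ hlt _ hmem himage₀ rfl
    rw [himage, lmon_smul (mul_ne_zero (hlead j) (bicoeff_lmon_ne_zero hφF))] at hl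
    exact ⟨l, hl⟩
  · exact ⟨j, by rwa [lmon_bivMap hlc]⟩

namespace IsReducedGB

variable {s : ℕ} {g : Fin (s + 1) → Biv k} {I : Ideal (Biv k)}

theorem mem (hg : IsReducedGB g I) (j : Fin (s + 1)) : g j ∈ I :=
  (hg.1.1 _ (List.mem_ofFn.2 ⟨j, rfl⟩)).2

theorem bicoeff_lmon (hg : IsReducedGB g I) (j : Fin (s + 1)) : bicoeff (lmon (g j)) (g j) = 1 :=
  hg.2.1 j

theorem exists_monDvd (hg : IsReducedGB g I) {u : Biv k} (hu : u ∈ I) (hu₀ : u ≠ 0) :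
    ∃ j, monDvd (lmon (g j)) (lmon u) := by
  obtain ⟨_, hv, hdvd⟩ := hg.1.2 u hu hu₀
  obtain ⟨j, rfl⟩ := List.mem_ofFn.1 hv
  exact ⟨j, hdvd⟩

theorem bicoeff_lmon_eq_zero (hg : IsReducedGB g I) (j : Fin (s + 1)) {u : Biv k} (hu : u ∈ I)
    (hu₀ : u ≠ 0) (hne : lmon u ≠ lmon (g j)) : bicoeff (lmon u) (g j) = 0 := by
  obtain ⟨l, hl⟩ := hg.exists_monDvd hu hu₀
  by_contra hocc
  obtain rfl | hjl := eq_or_ne j l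
  · have hlt : ¬ monLt (lmon (g j)) (lmon u) := fun h => hocc (bicoeff_eq_zero_of_lmon_lt h)
    simp only [monDvd, monLt] at hl hlt
    exact hne (Prod.ext (by omega) (by omega))
  · exact hg.2.2.1 j l hjl _ hocc hl

theorem congr_lmon [Nontrivial R] {J : Ideal (Biv R)} {G : Fin (s + 1) → Biv R}
    (hg : IsReducedGB g I) (hmem : ∀ j, G j ∈ J)
    (hone : ∀ j, bicoeff (lmon (g j)) (G j) = 1)
    (hzero : ∀ j m, bicoeff m (g j) = 0 → bicoeff m (G j) = 0)
    (hdvd : ∀ u ∈ J, u ≠ 0 → ∃ j, monDvd (lmon (g j)) (lmon u)) : IsReducedGB G J := by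
  have hlmon (j) : lmon (G j) = lmon (g j) :=
    lmon_eq_of_bicoeff (by rw [hone]; exact one_ne_zero)
      fun m hm => hzero j m (bicoeff_eq_zero_of_lmon_lt hm)
  refine ⟨⟨fun v hv => ?_, fun u hu hu₀ => ?_⟩, fun j => ?_, fun j l hjl m hm => ?_,
    fun j l hjl => ?_⟩
  · obtain ⟨j, rfl⟩ := List.mem_ofFn.1 hv
    refine ⟨fun h => one_ne_zero (α := R) ?_, hmem j⟩
    rw [← hone j, h, map_zero]
  · obtain ⟨j, hj⟩ := hdvd u hu hu₀
    exact ⟨G j, List.mem_ofFn.2 ⟨j, rfl⟩, by rwa [hlmon]⟩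
  · have hlead := hone j
    rwa [← hlmon] at hlead
  · rw [hlmon]
    exact hg.2.2.1 j l hjl m fun h => hm (hzero j m h)
  · rw [hlmon, hlmon]
    exact hg.2.2.2 j l hjl

theorem specialize {L : Type*} [Field L] (hg : IsReducedGB g I) {ψ : R →+* k}
    (hψ : Function.Injective ψ) {φ : R →+* L} (hφ : Function.Surjective φ) {J : Ideal (Biv R)}
    (hJ : J.map (bivMap ψ) ≤ I) {β : R} (hβ : φ β ≠ 0) {G : Fin (s + 1) → Biv R}
    (hG : ∀ j, bivMap ψ (G j) = ψ β • g j) (hmem : ∀ j, G j ∈ J) :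
    IsReducedGB (fun j => (φ β)⁻¹ • bivMap φ (G j)) (J.map (bivMap φ)) := by
  have hcoeff (j m) : ψ (bicoeff m (G j)) = ψ β * bicoeff m (g j) := by
    rw [← bicoeff_bivMap, hG, map_smul, smul_eq_mul]
  have hlead (j) : bicoeff (lmon (g j)) (G j) = β := hψ <| by
    rw [hcoeff, hg.bicoeff_lmon, mul_one]
  have hzero (j m) (h : bicoeff m (g j) = 0) : bicoeff m (G j) = 0 := hψ <| by
    rw [hcoeff, h, mul_zero, map_zero]
  have hβ₀ : β ≠ 0 := by
    rintro rfl
    exact hβ (map_zero φ)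
  have hlmon (j) : lmon (G j) = lmon (g j) :=
    lmon_eq_of_bicoeff (by rwa [hlead]) fun m hm => hzero j m (bicoeff_eq_zero_of_lmon_lt hm)
  have hJ' : J ≤ I.comap (bivMap ψ) := Ideal.map_le_iff_le_comap.1 hJ
  refine hg.congr_lmon (fun j => ?_) (fun j => ?_) (fun j m h => ?_) fun u hu hu₀ => ?_
  · rw [smul_eq_C_C_mul]
    exact Ideal.mul_mem_left _ _ (Ideal.mem_map_of_mem _ (hmem j))
  · rw [map_smul, bicoeff_bivMap, hlead, smul_eq_mul, inv_mul_cancel₀ hβ]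
  · rw [map_smul, bicoeff_bivMap, hzero j m h, map_zero, smul_zero]
  · obtain ⟨F, hF, rfl⟩ := (Ideal.mem_map_iff_of_surjective _ (bivMap_surjective hφ)).1 hu
    simp only [← hlmon]
    refine exists_monDvd_lmon_bivMap φ (I.comap (bivMap ψ)) G (fun j => hJ' (hmem j))
      (fun j => ?_) (fun F hF hF₀ => ?_) F (hJ' hF) hu₀
    · rwa [hlmon, hlead]
    · obtain ⟨j, hj⟩ := hg.exists_monDvd hF ((map_ne_zero_iff _ (bivMap_injective hψ)).2 hF₀)
      rw [lmon_bivMap_of_injective hψ, ← hlmon] at hj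
      exact ⟨j, hj⟩

theorem mod_prime {f : ι → Biv ℤ} {g : Fin (s + 1) → Biv ℚ}
    (hg : IsReducedGB g (Ideal.span (Set.range fun i => toQ (f i)))) {β : ℤ}
    {G : Fin (s + 1) → Biv ℤ} (hmem : ∀ j, G j ∈ Ideal.span (Set.range f))
    (hG : ∀ j, toQ (G j) = (β : ℚ) • g j) {p : ℕ} (hp : p.Prime) (hpβ : ¬ (p : ℤ) ∣ β) :
    IsReducedGB (fun j => C (C (β : ZMod p)⁻¹) * toP p (G j))
      (Ideal.span (Set.range fun i => toP p (f i))) := by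
  have : Fact p.Prime := ⟨hp⟩
  have hspan : (Ideal.span (Set.range f)).map (bivMap (Int.castRingHom ℚ)) =
      Ideal.span (Set.range fun i => toQ (f i)) := by
    rw [Ideal.map_span, ← Set.range_comp]
    rfl
  have hβp : Int.castRingHom (ZMod p) β ≠ 0 := by
    rwa [eq_intCast, Ne, ZMod.intCast_zmod_eq_zero_iff_dvd]
  have hmod := hg.specialize (Int.castRingHom ℚ).injective_int ZMod.intCast_surjective hspan.le
    hβp hG hmem
  simp only [smul_eq_C_C_mul, Ideal.map_span, ← Set.range_comp] at hmod
  exact hmod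

end IsReducedGB

end Specialization

section Box

variable {R : Type*} [CommRing R] {Y Z Y' Z' : ℕ}

variable (k) in
/-- The bivariate polynomials of `y`-degree less than `Y` and `x`-degree less than `Z`. -/
def box (Y Z : ℕ) : Submodule k (Biv k) where
  carrier := {p | ∀ m, bicoeff m p ≠ 0 → m.1 < Y ∧ m.2 < Z}
  zero_mem' m hm := absurd (map_zero _) hm
  add_mem' {p q} hp hq m hm := by
    by_cases h : bicoeff m p = 0
    · rw [map_add, h, zero_add] at hm
      exact hq m hm
    · exact hp m h
  smul_mem' c p hp m hm := by
    rw [map_smul] at hm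
    exact hp m (right_ne_zero_of_smul hm)

theorem mem_box_iff_degree {p : Biv k} :
    p ∈ box k Y Z ↔ p.degree < Y ∧ ∀ i, (p.coeff i).degree < Z := by
  simp only [degree_lt_iff_coeff_zero]
  refine ⟨fun hp => ⟨fun i hi => ?_, fun i j hj => ?_⟩, fun ⟨hy, hx⟩ m hm => ⟨?_, ?_⟩⟩
  · ext j
    by_contra hne
    exact hi.not_gt (hp (i, j) hne).1
  · by_contra hne
    exact hj.not_gt (hp (i, j) hne).2
  · by_contra! hle
    exact hm (by rw [bicoeff_apply, hy _ hle, coeff_zero])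
  · by_contra! hle
    exact hm (hx _ _ hle)

theorem box_mono (hY : Y ≤ Y') (hZ : Z ≤ Z') : box k Y Z ≤ box k Y' Z' :=
  fun _ hp m hm => ⟨(hp m hm).1.trans_le hY, (hp m hm).2.trans_le hZ⟩

theorem exists_mem_box (p : Biv k) : ∃ D, p ∈ box k D D := by
  let D := p.natDegree + p.support.sup (fun i => (p.coeff i).natDegree) + 1
  refine ⟨D, fun m hm => ?_⟩
  have hm₁ : p.coeff m.1 ≠ 0 := fun h => hm (by rw [bicoeff_apply, h, coeff_zero])
  have hy : m.1 ≤ p.natDegree := le_natDegree_of_ne_zero hm₁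
  have hx : m.2 ≤ (p.coeff m.1).natDegree := le_natDegree_of_ne_zero hm
  have hsup : (p.coeff m.1).natDegree ≤ p.support.sup (fun i => (p.coeff i).natDegree) :=
    Finset.le_sup (f := fun i => (p.coeff i).natDegree) (mem_support_iff.2 hm₁)
  omega

theorem mem_box_of_totDeg_le {p : Biv k} {d : ℕ} (hp : totDeg p ≤ d) :
    p ∈ box k (d + 1) (d + 1) := fun m hm => by
  have hm₁ : p.coeff m.1 ≠ 0 := fun h => hm (by rw [bicoeff_apply, h, coeff_zero])
  have hsup : m.1 + (p.coeff m.1).natDegree ≤ totDeg p :=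
    Finset.le_sup (f := fun j => j + (p.coeff j).natDegree) (mem_support_iff.2 hm₁)
  have hx : m.2 ≤ (p.coeff m.1).natDegree := le_natDegree_of_ne_zero hm
  omega

theorem bivMap_mem_box (φ : R →+* k) {p : Biv R} (hp : p ∈ box R Y Z) :
    bivMap φ p ∈ box k Y Z := fun m hm => hp m fun h => hm (by rw [bicoeff_bivMap, h, map_zero])

theorem monomial_monomial_mem_box {a b : ℕ} (ha : a < Y) (hb : b < Z) (c : k) :
    monomial a (monomial b c) ∈ box k Y Z := fun m hm => by
  rw [bicoeff_monomial_monomial (a, b)] at hm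
  obtain rfl : m = (a, b) := by
    by_contra hne
    exact hm (if_neg hne)
  exact ⟨ha, hb⟩

theorem C_mul_map_C_mem_box {p q : k[X]} (hp : p.degree < Z) (hq : q.degree < Y) :
    C p * q.map C ∈ box k Y Z := by
  rw [mem_box_iff_degree]
  rw [degree_lt_iff_coeff_zero] at hq
  refine ⟨degree_lt_iff_coeff_zero _ _ |>.2 fun i hi => ?_, fun i => ?_⟩
  · rw [coeff_C_mul, coeff_map, hq i hi, map_zero, mul_zero]
  · rw [coeff_C_mul, coeff_map, mul_comm, ← smul_eq_C_mul]
    exact (degree_smul_le _ _).trans_lt hp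

theorem mul_mem_box {p q : Biv k} (hp : p ∈ box k Y Z) (hq : q ∈ box k (Y' + 1) (Z' + 1)) :
    p * q ∈ box k (Y + Y') (Z + Z') := fun m hm => by
  rw [bicoeff_apply, coeff_mul, finsetSum_coeff] at hm
  obtain ⟨⟨i, i'⟩, hi, hne⟩ := Finset.exists_ne_zero_of_sum_ne_zero hm
  rw [coeff_mul] at hne
  obtain ⟨⟨j, j'⟩, hj, hne⟩ := Finset.exists_ne_zero_of_sum_ne_zero hne
  rw [Finset.HasAntidiagonal.mem_antidiagonal] at hi hj
  have hp' := hp (i, j) (left_ne_zero_of_mul hne)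
  have hq' := hq (i', j') (right_ne_zero_of_mul hne)
  simp only at hi hj hp' hq'
  omega

theorem bicoeff_swap (p : Biv k) (m : ℕ × ℕ) :
    bicoeff m (Bivariate.swap p) = bicoeff m.swap p := by
  induction p using Polynomial.induction_on' with
  | add p q hp hq => rw [map_add, map_add, map_add, hp, hq]
  | monomial a c =>
    induction c using Polynomial.induction_on' with
    | add p q hp hq => rw [map_add, map_add, map_add, map_add, hp, hq]
    | monomial b c =>
      rw [Bivariate.swap_monomial_monomial, bicoeff_monomial_monomial (b, a),
        bicoeff_monomial_monomial (a, b)]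
      simp only [Prod.ext_iff, Prod.fst_swap, Prod.snd_swap, and_comm]

theorem swap_mem_box {p : Biv k} (hp : p ∈ box k Y Z) : Bivariate.swap p ∈ box k Z Y :=
  fun m hm => (hp m.swap (by rwa [← bicoeff_swap])).symm

variable (k Y Z) in
/-- The coefficients of the monomials of `box k Y Z`. -/
def boxCoeff : Biv k →ₗ[k] (Fin Y × Fin Z → k) :=
  LinearMap.pi fun m => bicoeff (m.1, m.2)

theorem boxCoeff_apply (p : Biv k) (m : Fin Y × Fin Z) :
    boxCoeff k Y Z p m = bicoeff (m.1, m.2) p := rfl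

theorem eq_zero_of_boxCoeff_eq_zero {p : Biv k} (hp : p ∈ box k Y Z)
    (h : boxCoeff k Y Z p = 0) : p = 0 := by
  refine ext_bicoeff fun m => ?_
  rw [map_zero]
  by_contra hne
  obtain ⟨hy, hx⟩ := hp m hne
  exact hne (congrFun h (⟨m.1, hy⟩, ⟨m.2, hx⟩))

theorem boxCoeff_sum_monomial (c : Fin Y × Fin Z → k) :
    boxCoeff k Y Z (∑ m, monomial m.1 (monomial m.2 (c m))) = c := by
  funext m
  rw [boxCoeff_apply, map_sum, Finset.sum_eq_single m]
  · rw [bicoeff_monomial_monomial (m.1, m.2), if_pos rfl]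
  · intro m' _ hne
    rw [bicoeff_monomial_monomial (m'.1, m'.2), if_neg]
    simpa [Prod.ext_iff, Fin.ext_iff, eq_comm] using hne
  · exact fun h => absurd (Finset.mem_univ m) h

theorem sum_monomial_mem_box (c : Fin Y × Fin Z → k) :
    ∑ m, monomial (m.1 : ℕ) (monomial (m.2 : ℕ) (c m)) ∈ box k Y Z :=
  Submodule.sum_mem _ fun m _ => monomial_monomial_mem_box m.1.2 m.2.2 _

variable (k Y Z) in
/-- The coefficient isomorphism of `box k Y Z`. -/
def boxEquiv : box k Y Z ≃ₗ[k] (Fin Y × Fin Z → k) :=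
  LinearEquiv.ofBijective ((boxCoeff k Y Z).domRestrict (box k Y Z))
    ⟨(injective_iff_map_eq_zero _).2 fun p hp => Subtype.ext (eq_zero_of_boxCoeff_eq_zero p.2 hp),
      fun c => ⟨⟨_, sum_monomial_mem_box c⟩, boxCoeff_sum_monomial c⟩⟩

instance finite_box : Module.Finite k (box k Y Z) :=
  Module.Finite.equiv (boxEquiv k Y Z).symm

instance free_box : Module.Free k (box k Y Z) :=
  Module.Free.of_equiv (boxEquiv k Y Z).symm

theorem finrank_box [Nontrivial k] : Module.finrank k (box k Y Z) = Y * Z := by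
  rw [(boxEquiv k Y Z).finrank_eq, Module.finrank_fintype_fun_eq_card, Fintype.card_prod,
    Fintype.card_fin, Fintype.card_fin]

theorem box_eq_span : box k Y Z = Submodule.span k
    (Set.range fun m : Fin Y × Fin Z => (monomial m.1 (monomial m.2 1) : Biv k)) := by
  refine le_antisymm (fun p hp => ?_) (Submodule.span_le.2 ?_)
  · have hsum : ∑ m : Fin Y × Fin Z, monomial (m.1 : ℕ) (monomial (m.2 : ℕ)
        (boxCoeff k Y Z p m)) = p := by
      refine sub_eq_zero.1 (eq_zero_of_boxCoeff_eq_zero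
        (Submodule.sub_mem _ (sum_monomial_mem_box _) hp) ?_)
      rw [map_sub, boxCoeff_sum_monomial, sub_self]
    rw [← hsum]
    refine Submodule.sum_mem _ fun m _ => ?_
    have hsmul (c : k) : monomial (m.1 : ℕ) (monomial (m.2 : ℕ) c) =
        c • (monomial m.1 (monomial m.2 1) : Biv k) := by
      rw [smul_monomial, smul_monomial, smul_eq_mul, mul_one]
    rw [hsmul]
    exact Submodule.smul_mem _ _ (Submodule.subset_span ⟨m, rfl⟩)
  · rintro _ ⟨m, rfl⟩
    exact monomial_monomial_mem_box m.1.2 m.2.2 1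

end Box

section MacaulaySpace

variable {ι : Type*}

/-- The combinations `∑ i, q i * F i` whose cofactors `q i` have degree less than `T` in each
variable: the span of the rows of a Macaulay matrix of `F`. -/
def macaulaySpace (F : ι → Biv k) (T : ℕ) : Submodule k (Biv k) :=
  ⨆ i, (box k T T).map (LinearMap.mulRight k (F i))

variable {F : ι → Biv k}

theorem mul_generator_mem_macaulaySpace {T : ℕ} {q : Biv k} (hq : q ∈ box k T T) (i : ι) :
    q * F i ∈ macaulaySpace F T :=
  Submodule.mem_iSup_of_mem i ⟨q, hq, rfl⟩

theorem macaulaySpace_le_iff {T : ℕ} {V : Submodule k (Biv k)} :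
    macaulaySpace F T ≤ V ↔ ∀ i, ∀ q ∈ box k T T, q * F i ∈ V := by
  simp only [macaulaySpace, iSup_le_iff, Submodule.map_le_iff_le_comap]
  rfl

theorem macaulaySpace_mono {T T' : ℕ} (hT : T ≤ T') : macaulaySpace F T ≤ macaulaySpace F T' :=
  macaulaySpace_le_iff.2 fun i _ hq => mul_generator_mem_macaulaySpace (box_mono hT hT hq) i

theorem mem_span_of_mem_macaulaySpace {T : ℕ} {u : Biv k} (hu : u ∈ macaulaySpace F T) :
    u ∈ Ideal.span (Set.range F) := by
  have hle : macaulaySpace F T ≤ (Ideal.span (Set.range F)).restrictScalars k :=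
    macaulaySpace_le_iff.2 fun i q _ => Ideal.mul_mem_left _ q (Ideal.subset_span ⟨i, rfl⟩)
  exact hle hu

theorem mul_mem_macaulaySpace {D T : ℕ} {p u : Biv k} (hp : p ∈ box k D D)
    (hu : u ∈ macaulaySpace F (T + 1)) : p * u ∈ macaulaySpace F (D + T) := by
  have hle : macaulaySpace F (T + 1) ≤ (macaulaySpace F (D + T)).comap (LinearMap.mulLeft k p) :=
    macaulaySpace_le_iff.2 fun i q hq => by
      rw [Submodule.mem_comap, LinearMap.mulLeft_apply, ← mul_assoc]
      exact mul_generator_mem_macaulaySpace (mul_mem_box hp hq) i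
  exact hle hu

theorem macaulaySpace_le_box {d T : ℕ} (hF : ∀ i, F i ∈ box k (d + 1) (d + 1)) :
    macaulaySpace F T ≤ box k (T + d) (T + d) :=
  macaulaySpace_le_iff.2 fun i _ hq => mul_mem_box hq (hF i)

theorem swap_mem_macaulaySpace {T : ℕ} {u : Biv k}
    (hu : u ∈ macaulaySpace (fun i => Bivariate.swap (F i)) T) :
    Bivariate.swap u ∈ macaulaySpace F T := by
  have hle : macaulaySpace (fun i => Bivariate.swap (F i)) T ≤
      (macaulaySpace F T).comap (Bivariate.swap (R := k)).toLinearMap :=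
    macaulaySpace_le_iff.2 fun i q hq => by
      change Bivariate.swap (q * Bivariate.swap (F i)) ∈ macaulaySpace F T
      rw [map_mul, Bivariate.swap_swap_apply]
      exact mul_generator_mem_macaulaySpace (swap_mem_box hq) i
  exact hle hu

theorem macaulaySpace_eq_span (T : ℕ) : macaulaySpace F T = Submodule.span k
    (Set.range fun r : ι × Fin T × Fin T =>
      (monomial r.2.1 (monomial r.2.2 1) : Biv k) * F r.1) := by
  refine le_antisymm (iSup_le fun i => ?_) (Submodule.span_le.2 ?_)
  · rw [box_eq_span, Submodule.map_span, Submodule.span_le]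
    rintro _ ⟨_, ⟨m, rfl⟩, rfl⟩
    exact Submodule.subset_span ⟨(i, m), rfl⟩
  · rintro _ ⟨⟨i, m⟩, rfl⟩
    exact mul_generator_mem_macaulaySpace (monomial_monomial_mem_box m.1.2 m.2.2 1) i

end MacaulaySpace

section Elimination

variable {K : Type*} [Field K] {ι : Type*}

theorem exists_monic_aeval_mem {A : Type*} [CommRing A] [Algebra k A] (I : Ideal A)
    [Module.Finite k (A ⧸ I)] (z : A) : ∃ r : k[X], r.Monic ∧ aeval z r ∈ I := by
  obtain ⟨r, hr, hz⟩ := Algebra.IsIntegral.isIntegral (R := k) (Ideal.Quotient.mk I z)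
  refine ⟨r, hr, Ideal.Quotient.eq_zero_iff_mem.1 ?_⟩
  rw [← Ideal.Quotient.mkₐ_eq_mk k, ← aeval_algHom_apply]
  exact hz

theorem isUnit_of_dvd_C_of_dvd_map_C [IsDomain k] {q : Biv k} {r s : k[X]} (hr : r ≠ 0)
    (hs : s.Monic) (hqr : q ∣ C r) (hqs : q ∣ s.map C) : IsUnit q := by
  have hq : q.natDegree = 0 := by
    simpa using natDegree_le_of_dvd hqr (C_ne_zero.2 hr)
  rw [eq_C_of_natDegree_eq_zero hq] at hqs ⊢
  have hlead := (C_dvd_iff_dvd_coeff _ _).1 hqs s.natDegree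
  rw [coeff_map, hs.coeff_natDegree, map_one] at hlead
  exact (isUnit_of_dvd_one hlead).map C

theorem isUnit_of_forall_dvd [IsDomain k] {F : ι → Biv k}
    [Module.Finite k (Biv k ⧸ Ideal.span (Set.range F))] {q : Biv k} (hq : ∀ i, q ∣ F i) :
    IsUnit q := by
  have hdvd {u : Biv k} (hu : u ∈ Ideal.span (Set.range F)) : q ∣ u := by
    have hle : Ideal.span (Set.range F) ≤ Ideal.span {q} := by
      rw [Ideal.span_le]
      rintro _ ⟨i, rfl⟩
      exact Ideal.mem_span_singleton.2 (hq i)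
    exact Ideal.mem_span_singleton.1 (hle hu)
  obtain ⟨r, hr, hrI⟩ := exists_monic_aeval_mem (k := k) (Ideal.span (Set.range F)) (C X)
  obtain ⟨s, hs, hsI⟩ := exists_monic_aeval_mem (k := k) (Ideal.span (Set.range F)) X
  have hC : aeval (C X : Biv k) r = C r := by
    simpa using aeval_algHom_apply (CAlgHom (R := k) (A := k[X])) X r
  have hmap : aeval (X : Biv k) s = s.map C := aeval_X_left_eq_map s
  exact isUnit_of_dvd_C_of_dvd_map_C hr.ne_zero hs (hC ▸ hdvd hrI) (hmap ▸ hdvd hsI)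

theorem exists_ne_zero_of_forall_dvd {A : Type*} [CommSemiring A] [Nontrivial A] {F : ι → A}
    (hunit : ∀ p, (∀ i, p ∣ F i) → IsUnit p) : ∃ i, F i ≠ 0 := by
  by_contra! hzero
  exact not_isUnit_zero (hunit 0 fun i => by rw [hzero])

theorem exists_isRelPrime_sum_smul {A : Type*} [CommRing A] [IsDomain A]
    [UniqueFactorizationMonoid A] [Algebra K A] [Infinite K] [Fintype ι] {F : ι → A}
    (hF : ∀ p, (∀ i, p ∣ F i) → IsUnit p) {f : A} (hf : f ≠ 0) :
    ∃ b : ι → K, IsRelPrime f (∑ i, b i • F i) := by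
  classical
  let divisibleBy (p : A) : Submodule K (ι → K) :=
    ((Ideal.span {p}).restrictScalars K).comap (Fintype.linearCombination K F)
  have hmem (p c) : c ∈ divisibleBy p ↔ p ∣ ∑ i, c i • F i := by
    simp [divisibleBy, Ideal.mem_span_singleton, Fintype.linearCombination_apply]
  have hproper : ⊤ ∉ (UniqueFactorizationMonoid.factors f).toFinset.image divisibleBy := by
    intro h
    obtain ⟨p, hp, htop⟩ := Finset.mem_image.1 h
    have hirr := UniqueFactorizationMonoid.irreducible_of_factor p (Multiset.mem_toFinset.1 hp)
    refine hirr.not_isUnit (hF p fun i => ?_)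
    have hsingle : Pi.single i 1 ∈ divisibleBy p := htop ▸ Submodule.mem_top
    simpa [Pi.single_apply, ite_smul] using (hmem _ _).1 hsingle
  obtain ⟨b, hb⟩ := (Set.ne_univ_iff_exists_notMem _).1
    (Subspace.biUnion_ne_univ_of_top_notMem hproper)
  refine ⟨b, WfDvdMonoid.isRelPrime_of_no_irreducible_factors (fun h => hf h.1) fun p hp hpf hpb =>
    hb ?_⟩
  obtain ⟨q, hq, hpq⟩ := UniqueFactorizationMonoid.exists_mem_factors_of_dvd hf hp hpf
  simp only [Set.mem_iUnion]
  exact ⟨divisibleBy q, Finset.mem_image_of_mem _ (Multiset.mem_toFinset.2 hq),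
    (hmem _ _).2 (hpq.symm.dvd.trans hpb)⟩

theorem eq_zero_of_mul_add_mul_eq_zero {A : Type*} [CommRing A] [IsDomain A]
    [UniqueFactorizationMonoid A] {f g a b : A[X]} (hf : f ≠ 0) (hfg : IsRelPrime f g)
    (h : a * f + b * g = 0) (hb : b.degree < f.degree) : a = 0 ∧ b = 0 := by
  have hdvd : f ∣ b := hfg.dvd_of_dvd_mul_left ⟨-a, by linear_combination h⟩
  have hb₀ : b = 0 := by
    by_contra hb₀
    exact absurd (degree_le_of_dvd hdvd hb₀) (not_le.2 hb)
  rw [hb₀, zero_mul, add_zero] at h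
  exact ⟨(mul_eq_zero.1 h).resolve_right hf, hb₀⟩

theorem mem_box_natDegree {Y Z : ℕ} {p : Biv k} (hp : p ∈ box k Y Z) :
    p ∈ box k (p.natDegree + 1) Z := fun m hm =>
  ⟨Nat.lt_succ_of_le (le_natDegree_of_ne_zero fun h => hm (by rw [bicoeff_apply, h, coeff_zero])),
    (hp m hm).2⟩

theorem natDegree_le_of_mem_box {d Z : ℕ} {p : Biv k} (hp : p ∈ box k (d + 1) Z) :
    p.natDegree ≤ d :=
  natDegree_le_of_degree_le (Order.lt_succ_iff.1 (mem_box_iff_degree.1 hp).1)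

theorem C_coeff_zero_of_mem_box_one {Z : ℕ} {p : Biv k} (hp : p ∈ box k 1 Z) :
    C (p.coeff 0) = p :=
  (eq_C_of_natDegree_eq_zero (Nat.le_zero.1 (natDegree_le_of_mem_box hp))).symm

/-- Strict bound for the degrees of the eliminants, and of cofactors expressing them, of a
zero-dimensional system of polynomials of degree at most `d` in each variable. -/
def eliminantBound (d : ℕ) : ℕ := 2 * d ^ 2 + d + 1

theorem exists_mul_add_mul_mem_box_one {d : ℕ} {f g : Biv K} (hf : f ∈ box K (d + 1) (d + 1))
    (hg : g ∈ box K (d + 1) (d + 1)) (hf₀ : 0 < f.natDegree) (hfg : IsRelPrime f g) :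
    ∃ r ≠ 0, r ∈ box K 1 (eliminantBound d) ∧ ∃ a ∈ box K d (2 * d ^ 2 + 1),
      ∃ b ∈ box K d (2 * d ^ 2 + 1), a * f + b * g = r := by
  have hfd := natDegree_le_of_mem_box hf
  have hgd := natDegree_le_of_mem_box hg
  replace hf := mem_box_natDegree hf
  replace hg := mem_box_natDegree hg
  set m := f.natDegree
  set n := g.natDegree
  set e := 2 * d ^ 2 + 1 with he
  let Φ : (box K n e × box K m e) × box K 1 (e + d) →ₗ[K] Biv K :=
    ((LinearMap.mulRight K f ∘ₗ (box K n e).subtype).coprod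
      (LinearMap.mulRight K g ∘ₗ (box K m e).subtype)).coprod (-(box K 1 (e + d)).subtype)
  have hker : LinearMap.ker (boxCoeff K (m + n) (e + d) ∘ₗ Φ) ≠ ⊥ := by
    refine LinearMap.ker_ne_bot_of_finrank_lt
      (V := (box K n e × box K m e) × box K 1 (e + d)) ?_
    simp only [Module.finrank_prod, finrank_box, Module.finrank_fintype_fun_eq_card,
      Fintype.card_prod, Fintype.card_fin]
    nlinarith [Nat.mul_le_mul hfd (le_refl d), Nat.mul_le_mul hgd (le_refl d)]
  obtain ⟨⟨⟨a, b⟩, r⟩, hx, hx₀⟩ := Submodule.exists_mem_ne_zero_of_ne_bot hker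
  have hr : (a : Biv K) * f + b * g = r := by
    refine sub_eq_zero.1 (eq_zero_of_boxCoeff_eq_zero (Y := m + n) (Z := e + d)
      (Submodule.sub_mem _ (Submodule.add_mem _ ?_ ?_) ?_) ?_)
    · rw [add_comm m]
      exact mul_mem_box a.2 hf
    · exact mul_mem_box b.2 hg
    · exact box_mono (by omega) le_rfl r.2
    · rw [sub_eq_add_neg]
      exact hx
  refine ⟨r, fun hr₀ => hx₀ ?_, box_mono le_rfl (by rw [eliminantBound]; omega) r.2,
    a, box_mono hgd le_rfl a.2, b, box_mono hfd le_rfl b.2, hr⟩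
  have hf_ne : f ≠ 0 := ne_zero_of_natDegree_gt hf₀
  have hb : (b : Biv K).degree < f.degree := by
    rw [degree_eq_natDegree hf_ne]
    exact (mem_box_iff_degree.1 b.2).1
  obtain ⟨ha₀, hb₀⟩ := eq_zero_of_mul_add_mul_eq_zero hf_ne hfg (hr.trans hr₀) hb
  exact Prod.ext (Prod.ext (Subtype.ext ha₀) (Subtype.ext hb₀)) (Subtype.ext hr₀)

theorem exists_mem_macaulaySpace_box_one [Infinite K] [Finite ι] {d : ℕ} {F : ι → Biv K}
    (hF : ∀ i, F i ∈ box K (d + 1) (d + 1)) (hunit : ∀ p, (∀ i, p ∣ F i) → IsUnit p) :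
    ∃ r ≠ 0, r ∈ box K 1 (eliminantBound d) ∧ r ∈ macaulaySpace F (eliminantBound d) := by
  have := Fintype.ofFinite ι
  obtain ⟨i, hi⟩ := exists_ne_zero_of_forall_dvd hunit
  obtain ⟨b, hb⟩ := exists_isRelPrime_sum_smul (K := K) hunit hi
  have hd : d + 1 ≤ eliminantBound d := by
    rw [eliminantBound]
    omega
  rcases Nat.eq_zero_or_pos (F i).natDegree with hdeg | hdeg
  · have hbox := mem_box_natDegree (hF i)
    rw [hdeg] at hbox
    refine ⟨F i, hi, box_mono le_rfl hd hbox, ?_⟩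
    have hone : (1 : Biv K) ∈ box K (eliminantBound d) (eliminantBound d) := by
      simpa using monomial_monomial_mem_box (k := K) (Nat.zero_lt_of_lt hd)
        (Nat.zero_lt_of_lt hd) 1
    simpa using mul_generator_mem_macaulaySpace hone i
  · have hsum : ∑ j, b j • F j ∈ box K (d + 1) (d + 1) :=
      Submodule.sum_mem _ fun j _ => Submodule.smul_mem _ _ (hF j)
    obtain ⟨r, hr₀, hr, u, hu, v, hv, rfl⟩ := exists_mul_add_mul_mem_box_one (hF i) hsum hdeg hb
    have hle : box K d (2 * d ^ 2 + 1) ≤ box K (eliminantBound d) (eliminantBound d) :=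
      box_mono (by omega) (by rw [eliminantBound]; omega)
    refine ⟨_, hr₀, hr, Submodule.add_mem _ (mul_generator_mem_macaulaySpace (hle hu) i) ?_⟩
    rw [Finset.mul_sum]
    refine Submodule.sum_mem _ fun j _ => ?_
    rw [mul_smul_comm]
    exact Submodule.smul_mem _ _ (mul_generator_mem_macaulaySpace (hle hv) j)

theorem exists_monic_C_mem_macaulaySpace [Infinite K] [Finite ι] {d : ℕ} {F : ι → Biv K}
    (hF : ∀ i, F i ∈ box K (d + 1) (d + 1)) (hunit : ∀ p, (∀ i, p ∣ F i) → IsUnit p) :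
    ∃ R : K[X], R.Monic ∧ R.natDegree < eliminantBound d ∧
      C R ∈ macaulaySpace F (eliminantBound d) := by
  obtain ⟨r, hr₀, hbox, hr⟩ := exists_mem_macaulaySpace_box_one hF hunit
  obtain ⟨q, rfl⟩ : ∃ q, C q = r := ⟨_, C_coeff_zero_of_mem_box_one hbox⟩
  have hq₀ : q ≠ 0 := C_ne_zero.1 hr₀
  have hdeg : q.natDegree < eliminantBound d := by
    have hlt := (mem_box_iff_degree.1 hbox).2 0
    rwa [coeff_C_zero, degree_eq_natDegree hq₀, Nat.cast_lt] at hlt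
  refine ⟨q * C q.leadingCoeff⁻¹, monic_mul_leadingCoeff_inv hq₀, ?_, ?_⟩
  · rwa [natDegree_mul_leadingCoeff_self_inv]
  · rw [mul_comm, C_mul, ← smul_eq_C_C_mul]
    exact Submodule.smul_mem _ _ hr

theorem exists_monic_map_C_mem_macaulaySpace [Infinite K] [Finite ι] {d : ℕ} {F : ι → Biv K}
    (hF : ∀ i, F i ∈ box K (d + 1) (d + 1)) (hunit : ∀ p, (∀ i, p ∣ F i) → IsUnit p) :
    ∃ S : K[X], S.Monic ∧ S.natDegree < eliminantBound d ∧
      S.map C ∈ macaulaySpace F (eliminantBound d) := by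
  have hunit' (p : Biv K) (hp : ∀ i, p ∣ Bivariate.swap (F i)) : IsUnit p := by
    rw [← isUnit_map_iff (Bivariate.swap (R := K))]
    refine hunit _ fun i => ?_
    simpa only [Bivariate.swap_swap_apply] using map_dvd (Bivariate.swap (R := K)) (hp i)
  obtain ⟨S, hS, hdeg, hmem⟩ :=
    exists_monic_C_mem_macaulaySpace (fun i => swap_mem_box (hF i)) hunit'
  refine ⟨S, hS, hdeg, ?_⟩
  rw [← Bivariate.swap_C]
  exact swap_mem_macaulaySpace hmem

end Elimination

section Division

variable {R S : k[X]}

theorem monomial_mem_sup_map_mulRight_sup_box (hR : R.Monic) (hS : S.Monic) {D a b : ℕ}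
    (ha : a < D) (hb : b < D) :
    (monomial a (monomial b 1) : Biv k) ∈
      (box k D D).map (LinearMap.mulRight k (C R)) ⊔
        (box k D D).map (LinearMap.mulRight k (S.map C)) ⊔ box k S.natDegree R.natDegree := by
  nontriviality k
  have hxb : (X ^ b : k[X]).degree < D := by rwa [degree_X_pow, Nat.cast_lt]
  have hya : (X ^ a : k[X]).degree < D := by rwa [degree_X_pow, Nat.cast_lt]
  have hx := modByMonic_add_div (X ^ b) R
  have hy := modByMonic_add_div (X ^ a) S
  set r := X ^ b %ₘ R
  set q := X ^ b /ₘ R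
  set s := X ^ a %ₘ S
  set w := X ^ a /ₘ S
  have hr : r.degree < R.natDegree :=
    degree_eq_natDegree hR.ne_zero ▸ degree_modByMonic_lt _ hR
  have hs : s.degree < S.natDegree :=
    degree_eq_natDegree hS.ne_zero ▸ degree_modByMonic_lt _ hS
  have hrD : r.degree < D := (degree_modByMonic_le_left).trans_lt hxb
  have hqD : q.degree < D := (degree_divByMonic_le _ _).trans_lt hxb
  have hwD : w.degree < D := (degree_divByMonic_le _ _).trans_lt hya
  have hsplit : (monomial a (monomial b 1) : Biv k) =
      C q * (X ^ a : k[X]).map C * C R + C r * w.map C * S.map C + C r * s.map C := by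
    have hxy : (monomial a (monomial b 1) : Biv k) = C (X ^ b) * (X ^ a : k[X]).map C := by
      rw [Polynomial.map_pow, map_X, C_mul_X_pow_eq_monomial, X_pow_eq_monomial]
    have hx' := congrArg (C : k[X] → Biv k) hx
    have hy' := congrArg (Polynomial.map C : k[X] → Biv k) hy
    rw [C_add, C_mul] at hx'
    rw [Polynomial.map_add, Polynomial.map_mul] at hy'
    rw [hxy]
    linear_combination -(X ^ a : k[X]).map C * hx' - C r * hy'
  rw [hsplit]
  exact Submodule.add_mem_sup (Submodule.add_mem_sup
    (Submodule.mem_map_of_mem (f := LinearMap.mulRight k (C R)) (C_mul_map_C_mem_box hqD hya))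
    (Submodule.mem_map_of_mem (f := LinearMap.mulRight k (S.map C)) (C_mul_map_C_mem_box hrD hwD)))
    (C_mul_map_C_mem_box hr hs)

theorem exists_division (hR : R.Monic) (hS : S.Monic) {D : ℕ} {v : Biv k} (hv : v ∈ box k D D) :
    ∃ a ∈ box k D D, ∃ b ∈ box k D D, ∃ r ∈ box k S.natDegree R.natDegree,
      a * C R + b * S.map C + r = v := by
  have hle : box k D D ≤ (box k D D).map (LinearMap.mulRight k (C R)) ⊔
      (box k D D).map (LinearMap.mulRight k (S.map C)) ⊔ box k S.natDegree R.natDegree := by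
    conv_lhs => rw [box_eq_span]
    rw [Submodule.span_le]
    rintro _ ⟨m, rfl⟩
    exact monomial_mem_sup_map_mulRight_sup_box hR hS m.1.2 m.2.2
  obtain ⟨_, hab, r, hr, hsum⟩ := Submodule.mem_sup.1 (hle hv)
  obtain ⟨_, ⟨a, ha, rfl⟩, _, ⟨b, hb, rfl⟩, rfl⟩ := Submodule.mem_sup.1 hab
  exact ⟨a, ha, b, hb, r, hr, hsum⟩

theorem eq_zero_of_mem_box_of_eq_mul_add_mul (hR : R.Monic) (hS : S.Monic) {a b r : Biv k}
    (hr : r ∈ box k S.natDegree R.natDegree) (h : a * C R + b * S.map C = r) : r = 0 := by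
  nontriviality k
  obtain ⟨hy, hx⟩ := mem_box_iff_degree.1 hr
  have hSC : (S.map (C : k →+* k[X])).Monic := hS.map C
  have hmod : C R * (a %ₘ S.map C) = r := by
    have hlt : r.degree < (S.map (C : k →+* k[X])).degree := by
      rwa [hS.degree_map, degree_eq_natDegree hS.ne_zero]
    rw [← (modByMonic_eq_self_iff hSC).2 hlt, ← h, add_modByMonic,
      mul_self_modByMonic hSC, add_zero, mul_comm a, ← smul_eq_C_mul, ← smul_eq_C_mul,
      smul_modByMonic]
  ext1 i
  rw [coeff_zero]
  by_contra hne
  refine hR.not_dvd_of_degree_lt hne ?_ ⟨_, by rw [← hmod, coeff_C_mul]⟩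
  rw [degree_eq_natDegree hR.ne_zero]
  exact hx i

/-- The cofactors are reduced modulo `R(x)` and `S(y)`; what they lose is a combination of `C R` and
`S.map C` of bounded degree, hence again one with bounded cofactors. -/
theorem mem_macaulaySpace_of_mem_span {ι : Type*} [Finite ι] {F : ι → Biv k} {d L : ℕ}
    (hF : ∀ i, F i ∈ box k (d + 1) (d + 1)) (hR : R.Monic) (hS : S.Monic)
    (hRdeg : R.natDegree < L) (hSdeg : S.natDegree < L)
    (hRmem : C R ∈ macaulaySpace F L) (hSmem : S.map C ∈ macaulaySpace F L)
    {u : Biv k} (hu : u ∈ Ideal.span (Set.range F)) (hubox : u ∈ box k L L) :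
    u ∈ macaulaySpace F (2 * L + d) := by
  have := Fintype.ofFinite ι
  obtain ⟨c, rfl⟩ := Ideal.mem_span_range_iff_exists_fun.1 hu
  have hdiv (i : ι) : ∃ a b, ∃ r ∈ box k S.natDegree R.natDegree,
      a * C R + b * S.map C + r = c i := by
    obtain ⟨D, hD⟩ := exists_mem_box (c i)
    obtain ⟨a, -, b, -, r, hr, h⟩ := exists_division hR hS hD
    exact ⟨a, b, r, hr, h⟩
  choose a b r hr hc using hdiv
  have hrL (i : ι) : r i ∈ box k L L := box_mono hSdeg.le hRdeg.le (hr i)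
  have hbox : ∑ i, c i * F i - ∑ i, r i * F i ∈ box k (L + d) (L + d) :=
    Submodule.sub_mem _ (box_mono (by omega) (by omega) hubox)
      (Submodule.sum_mem _ fun i _ => mul_mem_box (hrL i) (hF i))
  obtain ⟨A, hA, B, hB, r', hr', hdiv'⟩ := exists_division hR hS hbox
  have hr'₀ : r' = 0 := by
    refine eq_zero_of_mem_box_of_eq_mul_add_mul (a := ∑ i, a i * F i - A)
      (b := ∑ i, b i * F i - B) hR hS hr' ?_
    have hsum : ∑ i, c i * F i = (∑ i, a i * F i) * C R + (∑ i, b i * F i) * S.map C +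
        ∑ i, r i * F i := by
      simp_rw [← hc, Finset.sum_mul, ← Finset.sum_add_distrib]
      exact Finset.sum_congr rfl fun i _ => by ring
    linear_combination -hdiv' - hsum
  have hu_eq : ∑ i, c i * F i = ∑ i, r i * F i + (A * C R + B * S.map C) := by
    linear_combination -hdiv' + hr'₀
  rw [hu_eq]
  have hmono : macaulaySpace F (L + d + L) ≤ macaulaySpace F (2 * L + d) :=
    macaulaySpace_mono (by omega)
  refine Submodule.add_mem _ (Submodule.sum_mem _ fun i _ => ?_) (hmono (Submodule.add_mem _ ?_ ?_))
  · exact macaulaySpace_mono (by omega) (mul_generator_mem_macaulaySpace (hrL i) i)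
  · exact mul_mem_macaulaySpace hA (macaulaySpace_mono L.le_succ hRmem)
  · exact mul_mem_macaulaySpace hB (macaulaySpace_mono L.le_succ hSmem)

end Division

section Cramer

open Matrix

variable {ι κ ρ : Type*} [Fintype κ] [DecidableEq κ]

theorem exists_injective_det_submatrix_ne_zero {K : Type*} [Field K] [Finite ι]
    (A : Matrix κ ι K) (hA : LinearIndependent K A.row) :
    ∃ P : κ → ι, Function.Injective P ∧ (A.submatrix id P).det ≠ 0 := by
  have := Fintype.ofFinite ι
  obtain ⟨γ, b, hb, hspan, hli⟩ := exists_linearIndependent' K A.col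
  have : Finite γ := Finite.of_injective b hb
  have : Fintype γ := Fintype.ofFinite γ
  have hcard : Fintype.card κ = Fintype.card γ := by
    rw [← finrank_span_eq_card hli, hspan, ← rank_eq_finrank_span_cols, hA.rank_matrix]
  let e : κ ≃ γ := Fintype.equivOfCardEq hcard
  refine ⟨b ∘ e, hb.comp e.injective, ?_⟩
  have hcols : LinearIndependent K (A.submatrix id (b ∘ e)).col := hli.comp e e.injective
  exact ((isUnit_iff_isUnit_det _).1 (linearIndependent_cols_iff_isUnit.1 hcols)).ne_zero

theorem exists_maximal_minor {K : Type*} [Field K] [Finite ι] [Finite ρ] (M : Matrix ρ ι K)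
    (Q : Set ι)
    (hQ : ∀ u ∈ Submodule.span K (Set.range M.row), (∀ m ∈ Q, u m = 0) → u = 0) :
    ∃ (n : ℕ) (a : Fin n → ρ) (P : Fin n → ι), Function.Injective P ∧ (∀ i, P i ∈ Q) ∧
      (M.submatrix a P).det ≠ 0 ∧
      Submodule.span K (Set.range (M.submatrix a id).row) = Submodule.span K (Set.range M.row) := by
  classical
  obtain ⟨γ, b, hb, hspan, hli⟩ := exists_linearIndependent' K M.row
  have : Finite γ := Finite.of_injective b hb
  let e := (Finite.equivFin γ).symm
  have hspan' : Submodule.span K (Set.range (M.submatrix (b ∘ e) id).row) =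
      Submodule.span K (Set.range M.row) := by
    rw [← hspan, ← e.surjective.range_comp]
    rfl
  let restrict : (ι → K) →ₗ[K] (Q → K) := LinearMap.funLeft K K Subtype.val
  have hinj : Set.InjOn restrict (Submodule.span K (Set.range (M.submatrix (b ∘ e) id).row)) := by
    rw [hspan', ← LinearMap.disjoint_ker_iff_injOn, LinearMap.disjoint_ker]
    exact fun u hu hu₀ => hQ u hu fun m hm => congrFun hu₀ ⟨m, hm⟩
  have hrows : LinearIndependent K ((M.submatrix (b ∘ e) (Subtype.val : Q → ι)).row) :=
    (hli.comp e e.injective).map_injOn restrict hinj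
  obtain ⟨P, hP, hdet⟩ := exists_injective_det_submatrix_ne_zero _ hrows
  exact ⟨_, b ∘ e, Subtype.val ∘ P, Subtype.val_injective.comp hP, fun i => (P i).2, hdet, hspan'⟩

theorem adjugate_row_eq_det_smul {R : Type*} [CommRing R] {A : Matrix κ κ R} {l : κ → R}
    {j : κ} (hl : l ᵥ* A = Pi.single j 1) : A.adjugate j = A.det • l := by
  calc A.adjugate j = Pi.single j 1 ᵥ* A.adjugate := (single_one_vecMul j _).symm
    _ = A.det • l := by rw [← hl, vecMul_vecMul, mul_adjugate, vecMul_smul, vecMul_one]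

theorem adjugate_row_vecMul_apply {R : Type*} [CommRing R] (A : Matrix κ κ R) (W : Matrix κ ι R)
    (j : κ) (m : ι) : (A.adjugate j ᵥ* W) m = (A.updateCol j (W.col m)).det := by
  rw [← cramer_apply, cramer_eq_adjugate_mulVec]
  rfl

theorem abs_det_le {A : Matrix κ κ ℤ} {H : ℝ} (hA : ∀ i j, |(A i j : ℝ)| ≤ H) :
    |(A.det : ℝ)| ≤ (Fintype.card κ).factorial * H ^ Fintype.card κ := by
  rw [Int.cast_det, ← nsmul_eq_mul]
  exact det_le (abv := AbsoluteValue.abs) hA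

theorem exists_vecMul_submatrix_eq_single {K : Type*} [Field K] {W : Matrix κ ι K} {P : κ → ι}
    (hdet : (W.submatrix id P).det ≠ 0) {u : ι → K}
    (hu : u ∈ Submodule.span K (Set.range W.row)) {m₀ : ι} (hm₀ : u m₀ = 1)
    (hP : Function.Injective P) (hu₀ : ∀ i, P i ≠ m₀ → u (P i) = 0) :
    ∃ (l : κ → K) (j : κ), l ᵥ* W = u ∧ l ᵥ* W.submatrix id P = Pi.single j 1 := by
  rw [← range_vecMulLinear] at hu
  obtain ⟨l, rfl : l ᵥ* W = u⟩ := hu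
  obtain ⟨j, rfl⟩ : ∃ j, P j = m₀ := by
    by_contra! hne
    have hl : l = 0 := eq_zero_of_vecMul_eq_zero hdet (funext fun i => hu₀ i (hne i))
    simp [hl] at hm₀
  refine ⟨l, j, rfl, funext fun i => ?_⟩
  rcases eq_or_ne i j with rfl | hij
  · rw [Pi.single_eq_same]
    exact hm₀
  · rw [Pi.single_eq_of_ne hij]
    exact hu₀ i (hP.ne hij)

theorem exists_common_denominator_of_span_rows [Fintype ι] [Finite ρ] (M : Matrix ρ ι ℤ) {H : ℝ}
    (hH : 1 ≤ H) (hM : ∀ r m, |(M r m : ℝ)| ≤ H) (Q : Set ι)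
    (hQ : ∀ u ∈ Submodule.span ℚ (Set.range (M.map (Int.cast : ℤ → ℚ)).row),
      (∀ m ∈ Q, u m = 0) → u = 0) :
    ∃ β : ℤ, β ≠ 0 ∧ |(β : ℝ)| ≤ (Fintype.card ι).factorial * H ^ Fintype.card ι ∧
      ∀ u ∈ Submodule.span ℚ (Set.range (M.map (Int.cast : ℤ → ℚ)).row), ∀ m₀, u m₀ = 1 →
        (∀ m ∈ Q, m ≠ m₀ → u m = 0) →
        ∃ w ∈ Submodule.span ℤ (Set.range M.row), (∀ m, (w m : ℚ) = β * u m) ∧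
          ∀ m, |(w m : ℝ)| ≤ (Fintype.card ι).factorial * H ^ Fintype.card ι := by
  obtain ⟨n, a, P, hP, hPQ, hdet, hspan⟩ := exists_maximal_minor _ Q hQ
  let W : Matrix (Fin n) ι ℤ := M.submatrix a id
  let A : Matrix (Fin n) (Fin n) ℤ := W.submatrix id P
  have hbound {B : Matrix (Fin n) (Fin n) ℤ} (hB : ∀ i j, |(B i j : ℝ)| ≤ H) :
      |(B.det : ℝ)| ≤ (Fintype.card ι).factorial * H ^ Fintype.card ι := by
    have hn : n ≤ Fintype.card ι := by simpa using Fintype.card_le_of_injective P hP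
    refine (abs_det_le hB).trans ?_
    rw [Fintype.card_fin]
    gcongr
  have hdetA : (A.det : ℚ) = ((W.map Int.cast).submatrix id P).det := Int.cast_det A
  refine ⟨A.det, fun h => hdet ?_, hbound fun i j => hM _ _, fun u hu m₀ hm₀ hu₀ => ?_⟩
  · exact hdetA.symm.trans (by rw [h, Int.cast_zero])
  rw [← hspan] at hu
  obtain ⟨l, j, hl, hlj⟩ := exists_vecMul_submatrix_eq_single (W := W.map Int.cast) hdet hu hm₀ hP
    fun i hi => hu₀ _ (hPQ i) hi
  refine ⟨A.adjugate j ᵥ* W, ?_, fun m => ?_, fun m => ?_⟩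
  · have hmem : A.adjugate j ᵥ* W ∈ Submodule.span ℤ (Set.range W.row) := by
      rw [← range_vecMulLinear]
      exact ⟨_, rfl⟩
    exact Submodule.span_mono (Set.range_comp_subset_range a M.row) hmem
  · have hadj : (Int.castRingHom ℚ) ∘ A.adjugate j = (A.det : ℚ) • l := by
      rw [hdetA, ← adjugate_row_eq_det_smul hlj]
      exact congrFun ((Int.castRingHom ℚ).map_adjugate A) j
    have hcast := (Int.castRingHom ℚ).map_vecMul W (A.adjugate j) m
    rw [hadj, smul_vecMul] at hcast
    exact hcast.trans (by rw [← hl]; rfl)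
  · rw [adjugate_row_vecMul_apply]
    refine hbound fun i i' => ?_
    rw [updateCol_apply]
    split_ifs <;> exact hM _ _

end Cramer

section MacaulayMatrix

variable {ι : Type*} {d T : ℕ} {f : ι → Biv ℤ}

/-- The Macaulay matrix of `f`: its rows are the coefficient vectors of the products of the `f i`
with the monomials of degree less than `T` in each variable, its columns are the monomials of degree
less than `T + d` in each variable. -/
def macaulayMatrix (f : ι → Biv ℤ) (d T : ℕ) :
    Matrix (ι × Fin T × Fin T) (Fin (T + d) × Fin (T + d)) ℤ :=
  Matrix.of fun r => boxCoeff ℤ (T + d) (T + d) (monomial r.2.1 (monomial r.2.2 1) * f r.1)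

theorem span_row_macaulayMatrix :
    Submodule.span ℤ (Set.range (macaulayMatrix f d T).row) =
      (macaulaySpace f T).map (boxCoeff ℤ (T + d) (T + d)) := by
  rw [macaulaySpace_eq_span, Submodule.map_span, ← Set.range_comp]
  rfl

theorem boxCoeff_toQ {Y Z : ℕ} (p : Biv ℤ) (m : Fin Y × Fin Z) :
    boxCoeff ℚ Y Z (toQ p) m = boxCoeff ℤ Y Z p m :=
  bicoeff_toQ _ p

theorem span_row_map_macaulayMatrix :
    Submodule.span ℚ (Set.range ((macaulayMatrix f d T).map (Int.cast : ℤ → ℚ)).row) =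
      (macaulaySpace (fun i => toQ (f i)) T).map (boxCoeff ℚ (T + d) (T + d)) := by
  rw [macaulaySpace_eq_span, Submodule.map_span, ← Set.range_comp]
  congr 2
  funext r m
  have hmonomial : toQ (monomial r.2.1 (monomial r.2.2 1)) =
      monomial (r.2.1 : ℕ) (monomial (r.2.2 : ℕ) 1) := by
    simp [toQ]
  change ((boxCoeff ℤ _ _ _ m : ℤ) : ℚ) = boxCoeff ℚ _ _ _ m
  rw [← boxCoeff_toQ, map_mul, hmonomial]

theorem abs_macaulayMatrix_le {H : ℝ} (hH : 0 ≤ H) (hf : ∀ i m, |((bicoeff m (f i) : ℤ) : ℝ)| ≤ H)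
    (r : ι × Fin T × Fin T) (m : Fin (T + d) × Fin (T + d)) :
    |(macaulayMatrix f d T r m : ℝ)| ≤ H := by
  change |((bicoeff (m.1, m.2)
    (monomial (r.2.1 : ℕ) (monomial (r.2.2 : ℕ) 1) * f r.1) : ℤ) : ℝ)| ≤ H
  rw [bicoeff_monomial_mul (r.2.1, r.2.2)]
  split_ifs
  · simpa using hf _ _
  · simpa using hH

theorem exists_common_denominator_macaulaySpace [Finite ι]
    (hbox : ∀ i, f i ∈ box ℤ (d + 1) (d + 1)) {H : ℝ} (hH : 1 ≤ H)
    (hf : ∀ i m, |((bicoeff m (f i) : ℤ) : ℝ)| ≤ H) (Q : Set (ℕ × ℕ))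
    (hQ : ∀ u ∈ macaulaySpace (fun i => toQ (f i)) T, (∀ m ∈ Q, bicoeff m u = 0) → u = 0) :
    ∃ β : ℤ, β ≠ 0 ∧ |(β : ℝ)| ≤ ((T + d) ^ 2).factorial * H ^ ((T + d) ^ 2) ∧
      ∀ u ∈ macaulaySpace (fun i => toQ (f i)) T, ∀ m₀, bicoeff m₀ u = 1 →
        (∀ m ∈ Q, m ≠ m₀ → bicoeff m u = 0) →
        ∃ w ∈ macaulaySpace f T, toQ w = (β : ℚ) • u ∧
          ∀ m, |((bicoeff m w : ℤ) : ℝ)| ≤ ((T + d) ^ 2).factorial * H ^ ((T + d) ^ 2) := by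
  have hboxQ : macaulaySpace (fun i => toQ (f i)) T ≤ box ℚ (T + d) (T + d) :=
    macaulaySpace_le_box fun i => bivMap_mem_box (Int.castRingHom ℚ) (hbox i)
  have hcard : Fintype.card (Fin (T + d) × Fin (T + d)) = (T + d) ^ 2 := by
    rw [Fintype.card_prod, Fintype.card_fin, sq]
  obtain ⟨β, hβ₀, hβ, hmul⟩ := exists_common_denominator_of_span_rows (macaulayMatrix f d T) hH
    (abs_macaulayMatrix_le (zero_le_one.trans hH) hf) {m | ((m.1 : ℕ), (m.2 : ℕ)) ∈ Q} (by
      rw [span_row_map_macaulayMatrix]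
      rintro _ ⟨u, hu, rfl⟩ hzero
      rw [hQ u hu fun m hm => ?_, map_zero]
      by_contra hne
      obtain ⟨hy, hx⟩ := hboxQ hu m hne
      exact hne (hzero (⟨m.1, hy⟩, ⟨m.2, hx⟩) hm))
  rw [span_row_map_macaulayMatrix, span_row_macaulayMatrix, hcard] at hmul
  rw [hcard] at hβ
  refine ⟨β, hβ₀, hβ, fun u hu m₀ hone hzero => ?_⟩
  obtain ⟨hy, hx⟩ := hboxQ hu m₀ (hone.trans_ne one_ne_zero)
  obtain ⟨_, ⟨w, hw, rfl⟩, hwu, hwH⟩ := hmul _ ⟨u, hu, rfl⟩ (⟨m₀.1, hy⟩, ⟨m₀.2, hx⟩) hone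
    fun m hm hne => hzero _ hm fun h => hne (by ext <;> simp [← h])
  refine ⟨w, hw, sub_eq_zero.1 (eq_zero_of_boxCoeff_eq_zero (Submodule.sub_mem _ (bivMap_mem_box
    (Int.castRingHom ℚ) (macaulaySpace_le_box hbox hw)) (Submodule.smul_mem _ _ (hboxQ hu)))
    (funext fun m => ?_)), fun m => ?_⟩
  · change boxCoeff ℚ _ _ (toQ w - (β : ℚ) • u) m = 0
    rw [map_sub, map_smul, Pi.sub_apply, boxCoeff_toQ, hwu, Pi.smul_apply, smul_eq_mul, sub_self]
  · by_cases hm : bicoeff m w = 0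
    · rw [hm, Int.cast_zero, abs_zero]
      positivity
    · obtain ⟨hy, hx⟩ := macaulaySpace_le_box hbox hw m hm
      exact hwH (⟨m.1, hy⟩, ⟨m.2, hx⟩)

theorem one_le_of_abs_bicoeff_le
    [Module.Finite ℚ (Biv ℚ ⧸ Ideal.span (Set.range fun i => toQ (f i)))]
    {H : ℝ} (hf : ∀ i m, |((bicoeff m (f i) : ℤ) : ℝ)| ≤ H) : 1 ≤ H := by
  obtain ⟨i, hi⟩ := exists_ne_zero_of_forall_dvd
    fun p (hp : ∀ i, p ∣ toQ (f i)) => isUnit_of_forall_dvd hp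
  have hfi : f i ≠ 0 := fun h => hi (by rw [h, map_zero])
  calc (1 : ℝ) ≤ |((bicoeff (lmon (f i)) (f i) : ℤ) : ℝ)| := by
        exact_mod_cast Int.one_le_abs (bicoeff_lmon_ne_zero hfi)
    _ ≤ H := hf i _

/-- The number of columns of the Macaulay matrix with cofactors of degree less than
`2 * eliminantBound d + d`. -/
def macaulayColumns (d : ℕ) : ℕ := (2 * eliminantBound d + d + d) ^ 2

end MacaulayMatrix

namespace IsReducedGB

variable {s : ℕ} {g : Fin (s + 1) → Biv k} {I : Ideal (Biv k)}

theorem mem_box_of_monic_mem (hg : IsReducedGB g I) {R S : k[X]} (hR : R.Monic) (hS : S.Monic)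
    (hRI : C R ∈ I) (hSI : S.map C ∈ I) (j : Fin (s + 1)) :
    g j ∈ box k (S.natDegree + 1) (R.natDegree + 1) := fun m hm => by
  have := nontrivial_of_ne _ _ hm
  have hRlmon : lmon (C R) = (0, R.natDegree) := by
    rw [lmon, natDegree_C, leadingCoeff_C]
  have hSlmon : lmon (S.map C : Biv k) = (S.natDegree, 0) := by
    rw [lmon, (hS.map C).leadingCoeff, natDegree_one, hS.natDegree_map]
  obtain ⟨l₁, hl₁⟩ := hg.exists_monDvd hRI (C_ne_zero.2 hR.ne_zero)
  obtain ⟨l₂, hl₂⟩ := hg.exists_monDvd hSI (hS.map C).ne_zero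
  rw [hRlmon] at hl₁
  rw [hSlmon] at hl₂
  have hlt : ¬ monLt (lmon (g j)) m := fun h => hm (bicoeff_eq_zero_of_lmon_lt h)
  have hred (l) (hjl : j ≠ l) : ¬ monDvd (lmon (g l)) m := hg.2.2.1 j l hjl m hm
  simp only [monDvd, monLt] at hl₁ hl₂ hlt hred
  constructor
  · obtain rfl | hjl := eq_or_ne j l₂
    · omega
    · have := hred l₂ hjl
      omega
  · obtain rfl | hjl := eq_or_ne j l₁
    · omega
    · have := hred l₁ hjl
      omega

theorem mem_macaulaySpace {K ι : Type*} [Field K] [Infinite K] [Finite ι] {d : ℕ} {F : ι → Biv K}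
    {g : Fin (s + 1) → Biv K} (hg : IsReducedGB g (Ideal.span (Set.range F)))
    (hF : ∀ i, F i ∈ box K (d + 1) (d + 1)) (hunit : ∀ p, (∀ i, p ∣ F i) → IsUnit p)
    (j : Fin (s + 1)) : g j ∈ macaulaySpace F (2 * eliminantBound d + d) := by
  obtain ⟨R, hR, hRdeg, hRmem⟩ := exists_monic_C_mem_macaulaySpace hF hunit
  obtain ⟨S, hS, hSdeg, hSmem⟩ := exists_monic_map_C_mem_macaulaySpace hF hunit
  refine mem_macaulaySpace_of_mem_span hF hR hS hRdeg hSdeg hRmem hSmem (hg.mem j) ?_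
  exact box_mono hSdeg hRdeg (hg.mem_box_of_monic_mem hR hS (mem_span_of_mem_macaulaySpace hRmem)
    (mem_span_of_mem_macaulaySpace hSmem) j)

theorem exists_common_denominator_of_mem_macaulaySpace {ι : Type*} [Finite ι] {d T : ℕ}
    {f : ι → Biv ℤ} {g : Fin (s + 1) → Biv ℚ}
    (hg : IsReducedGB g (Ideal.span (Set.range fun i => toQ (f i))))
    (hbox : ∀ i, f i ∈ box ℤ (d + 1) (d + 1)) {H : ℝ} (hH : 1 ≤ H)
    (hf : ∀ i m, |((bicoeff m (f i) : ℤ) : ℝ)| ≤ H)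
    (hmem : ∀ j, g j ∈ macaulaySpace (fun i => toQ (f i)) T) :
    ∃ β : ℤ, β ≠ 0 ∧ |(β : ℝ)| ≤ ((T + d) ^ 2).factorial * H ^ ((T + d) ^ 2) ∧
      ∃ G : Fin (s + 1) → Biv ℤ, ∀ j, G j ∈ Ideal.span (Set.range f) ∧
        toQ (G j) = (β : ℚ) • g j ∧
        ∀ m, |((bicoeff m (G j) : ℤ) : ℝ)| ≤ ((T + d) ^ 2).factorial * H ^ ((T + d) ^ 2) := by
  let leadingMonomials := {m | ∃ u ∈ Ideal.span (Set.range fun i => toQ (f i)), u ≠ 0 ∧ lmon u = m}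
  obtain ⟨β, hβ₀, hβ, hmul⟩ :=
    exists_common_denominator_macaulaySpace hbox hH hf leadingMonomials fun u hu hzero => by
      by_contra hu₀
      exact bicoeff_lmon_ne_zero hu₀
        (hzero _ ⟨u, mem_span_of_mem_macaulaySpace hu, hu₀, rfl⟩)
  choose G hG hGg hGH using fun j => hmul (g j) (hmem j) (lmon (g j)) (hg.bicoeff_lmon j) (by
    rintro _ ⟨u, hu, hu₀, rfl⟩ hne
    exact hg.bicoeff_lmon_eq_zero j hu hu₀ hne)
  exact ⟨β, hβ₀, hβ, G, fun j => ⟨mem_span_of_mem_macaulaySpace (hG j), hGg j, hGH j⟩⟩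

theorem exists_common_denominator {ι : Type*} [Finite ι] {d : ℕ} {f : ι → Biv ℤ}
    [Module.Finite ℚ (Biv ℚ ⧸ Ideal.span (Set.range fun i => toQ (f i)))]
    {g : Fin (s + 1) → Biv ℚ} (hg : IsReducedGB g (Ideal.span (Set.range fun i => toQ (f i))))
    (hbox : ∀ i, f i ∈ box ℤ (d + 1) (d + 1)) {H : ℝ}
    (hf : ∀ i m, |((bicoeff m (f i) : ℤ) : ℝ)| ≤ H) :
    ∃ β : ℤ, β ≠ 0 ∧ |(β : ℝ)| ≤ (macaulayColumns d).factorial * H ^ macaulayColumns d ∧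
      ∃ G : Fin (s + 1) → Biv ℤ, ∀ j, G j ∈ Ideal.span (Set.range f) ∧
        toQ (G j) = (β : ℚ) • g j ∧ ∀ m, |((bicoeff m (G j) : ℤ) : ℝ)| ≤
          (macaulayColumns d).factorial * H ^ macaulayColumns d := by
  exact hg.exists_common_denominator_of_mem_macaulaySpace hbox (one_le_of_abs_bicoeff_le hf) hf
    (hg.mem_macaulaySpace (fun i => bivMap_mem_box (Int.castRingHom ℚ) (hbox i))
      fun _ hp => isUnit_of_forall_dvd hp)

end IsReducedGB

section Estimate

theorem factorial_mul_exp_pow_le {n N : ℕ} {h : ℝ} (hn : n ≤ N) (hh : 0 ≤ h) :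
    n.factorial * Real.exp h ^ n ≤ Real.exp (N * Real.log N + N * h) := by
  have hfactorial : (n.factorial : ℝ) ≤ Real.exp (N * Real.log N) := by
    rcases N.eq_zero_or_pos with rfl | hN
    · simp [Nat.le_zero.1 hn]
    · rw [Real.exp_nat_mul, Real.exp_log (Nat.cast_pos.2 hN)]
      exact_mod_cast (Nat.factorial_le hn).trans (Nat.factorial_le_pow N)
  have hexp : Real.exp h ^ n ≤ Real.exp (N * h) := by
    rw [← Real.exp_nat_mul, Real.exp_le_exp]
    gcongr
  rw [Real.exp_add]
  gcongr

theorem sq_le_hermiteSize {n d : ℕ} (hd : 1 ≤ d) : n ^ 2 ≤ n ^ 2 * d - n * d + n := by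
  obtain ⟨e, rfl⟩ : ∃ e, d = e + 1 := ⟨d - 1, by omega⟩
  have hle : n * e ≤ n ^ 2 * e := Nat.mul_le_mul_right _ (Nat.le_self_pow two_ne_zero n)
  rw [mul_add_one, mul_add_one]
  omega

theorem macaulayColumns_le_Delta3_sq (d : ℕ) : macaulayColumns d ≤ Delta3 d ^ 2 := by
  refine Nat.pow_le_pow_left ?_ 2
  have hd : d ≤ max d 3 := le_max_left _ _
  have hd₂ : d ^ 2 ≤ max d 3 ^ 2 := Nat.pow_le_pow_left hd 2
  have hd₄ : max d 3 ^ 2 ≤ max d 3 ^ 4 := Nat.pow_le_pow_right (by omega) (by omega)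
  have hone : 1 ≤ max d 3 ^ 2 := Nat.one_le_pow _ _ (by omega)
  rw [eliminantBound, Delta3]
  nlinarith

theorem factorial_mul_exp_pow_le_exp_Cfun {t d n : ℕ} {h : ℝ} (ht : 1 ≤ t) (hd : 1 ≤ d) (hh : 0 ≤ h)
    (hn : n ≤ Delta3 d ^ 2) :
    n.factorial * Real.exp h ^ n ≤ Real.exp (Cfun t d (Delta3 d) h) := by
  have hle : Delta3 d ≤ t * Delta3 d := Nat.le_mul_of_pos_left _ ht
  have hN := hn.trans ((Nat.pow_le_pow_left hle 2).trans (sq_le_hermiteSize hd))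
  refine (factorial_mul_exp_pow_le hN hh).trans (Real.exp_le_exp.2 ?_)
  have hlog : 0 ≤ Real.log (((t * Delta3 d : ℕ) : ℝ) * ((d : ℝ) + 1)) := by
    exact_mod_cast Real.log_natCast_nonneg (t * Delta3 d * (d + 1))
  have hlog₂ : 0 ≤ Real.log 2 := Real.log_nonneg one_le_two
  rw [Cfun, Bfun]
  linarith

end Estimate

/-- let `F = (f_1, …, f_t) ⊂ ℤ[x,y]` (`t ≥ 2`) generate a
zero-dimensional ideal `I ⊆ ℚ[x,y]`, with total degrees at most `d ≥ 1` and
coefficients of absolute value at most `e^h`. Let `G = (g_0, …, g_s)` be the reduced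
minimal lexicographic Gröbner basis of `I` (for `x ≺ y`). Then there is a nonzero
integer `β` such that (a) all `β gⱼ` have integer coefficients, (b) `|β|` and all
coefficients of the `β gⱼ` are at most `exp (C(t,d,Δ₃(d),h))` in absolute value, and
(c) for every prime `p ∤ β`, the images of the `gⱼ` in `F_p[x,y]` form the reduced
minimal lexicographic Gröbner basis of `⟨f_1 mod p, …, f_t mod p⟩`. -/
theorem height_bound_case3 {t s : ℕ} (ht : 2 ≤ t)
    (f : Fin t → Biv ℤ) (d : ℕ) (hd : 1 ≤ d) (h : ℝ)
    (htot : ∀ i, totDeg (f i) ≤ d)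
    (hht : ∀ i (a b : ℕ), ((|((f i).coeff a).coeff b| : ℤ) : ℝ) ≤ Real.exp h)
    (I : Ideal (Biv ℚ)) (hI : I = Ideal.span (Set.range fun i => toQ (f i)))
    (hdim : FiniteDimensional ℚ (Biv ℚ ⧸ I))
    (g : Fin (s + 1) → Biv ℚ) (hg : IsReducedGB g I) :
    ∃ β : ℤ, β ≠ 0 ∧
      ∃ gz : Fin (s + 1) → Biv ℤ,
        (∀ j, toQ (gz j) = Polynomial.C (Polynomial.C (β : ℚ)) * g j) ∧
        ((|β| : ℝ) ≤ Real.exp (Cfun t d (Delta3 d) h)) ∧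
        (∀ j (a b : ℕ), ((|((gz j).coeff a).coeff b| : ℤ) : ℝ) ≤
          Real.exp (Cfun t d (Delta3 d) h)) ∧
        (∀ p : ℕ, p.Prime → ¬ ((p : ℤ) ∣ β) →
          IsReducedGB
            (fun j => Polynomial.C (Polynomial.C ((β : ZMod p))⁻¹) * toP p (gz j))
            (Ideal.span (Set.range fun i => toP p (f i)))) := by
  subst hI
  have hbound (i m) : |((bicoeff m (f i) : ℤ) : ℝ)| ≤ Real.exp h := by
    exact_mod_cast hht i m.1 m.2
  obtain ⟨β, hβ₀, hβ, gz, hgz⟩ :=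
    hg.exists_common_denominator (fun i => mem_box_of_totDeg_le (htot i)) hbound
  have hh : 0 ≤ h := Real.one_le_exp_iff.1 (one_le_of_abs_bicoeff_le hbound)
  have hC := factorial_mul_exp_pow_le_exp_Cfun (one_le_two.trans ht) hd hh
    (macaulayColumns_le_Delta3_sq d)
  refine ⟨β, hβ₀, gz, fun j => ?_, hβ.trans hC, fun j a b => ?_, fun p hp hpβ => ?_⟩
  · rw [← smul_eq_C_C_mul]
    exact (hgz j).2.1
  · rw [Int.cast_abs]
    exact ((hgz j).2.2 (a, b)).trans hC
  · exact hg.mod_prime (fun j => (hgz j).1) (fun j => (hgz j).2.1) hp hpβ
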